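/- Let Q be a primitive positive-definite quaternary integer-valued quadratic form with discriminant D(Q), and let n be a positive integer. If there exists x ∈ ℤ_2⁴ with Q(x) = n and x ∉ 2·ℤ_2⁴ (i.e. n is primitively represented by Q over ℤ_2), then the local density β_2(Q;n) exists and satisfies β_2(Q;n) ≥ (1/16) · 2^(−⌊(ord_2(D(Q)) + 1)/2⌋), where ord_2 denotes the 2-adic valuation. -/

import Mathlib

open scoped BigOperators

/-- Value of the quadratic form with Gram matrix `A` (symmetric, even diagonal)
over any commutative ring: `Q(x) = ∑ (aᵢᵢ/2) xᵢ² + ∑_{i<j} aᵢⱼ xᵢ xⱼ`. -/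
def Qval {R : Type*} [CommRing R] (A : Matrix (Fin 4) (Fin 4) ℤ) (x : Fin 4 → R) : R :=
  (∑ i, ((A i i / 2 : ℤ) : R) * x i ^ 2) +
    ∑ i, ∑ j ∈ Finset.Ioi i, ((A i j : ℤ) : R) * (x i * x j)

/-- `A` is the Gram matrix of an integer-valued quadratic form. -/
def IsGram (A : Matrix (Fin 4) (Fin 4) ℤ) : Prop :=
  A.IsSymm ∧ ∀ i, 2 ∣ A i i

/-- The form is primitive: the gcd of its coefficients is 1. -/
def IsPrimitiveQF (A : Matrix (Fin 4) (Fin 4) ℤ) : Prop :=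
  ∀ d : ℤ, (∀ i, d ∣ A i i / 2) → (∀ i j, i ≠ j → d ∣ A i j) → IsUnit d

/-- The form is positive definite. -/
def PosDefQF (A : Matrix (Fin 4) (Fin 4) ℤ) : Prop :=
  (A.map (Int.cast : ℤ → ℝ)).PosDef

/-- `N` is the level of the form with Gram matrix `A`: the smallest positive integer
such that `N • A⁻¹` has integer entries and even diagonal. -/
def IsLevel (A : Matrix (Fin 4) (Fin 4) ℤ) (N : ℕ) : Prop :=
  0 < N ∧
    (∃ B : Matrix (Fin 4) (Fin 4) ℤ,
      B.map (Int.cast : ℤ → ℚ) = (N : ℚ) • (A.map (Int.cast : ℤ → ℚ))⁻¹ ∧ ∀ i, 2 ∣ B i i) ∧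
    ∀ M : ℕ, 0 < M →
      (∃ B : Matrix (Fin 4) (Fin 4) ℤ,
        B.map (Int.cast : ℤ → ℚ) = (M : ℚ) • (A.map (Int.cast : ℤ → ℚ))⁻¹ ∧ ∀ i, 2 ∣ B i i) →
      N ≤ M

/-- `n` is represented by the form over `ℤ`. -/
def Represented (A : Matrix (Fin 4) (Fin 4) ℤ) (n : ℕ) : Prop :=
  ∃ x : Fin 4 → ℤ, Qval A x = (n : ℤ)

/-- `n` is locally represented: representable over `ℤ_p` for every prime `p`. -/
def LocallyRepresented (A : Matrix (Fin 4) (Fin 4) ℤ) (n : ℕ) : Prop :=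
  ∀ (p : ℕ) [Fact p.Prime], ∃ x : Fin 4 → ℤ_[p], Qval A x = (n : ℤ_[p])

/-- Number of solutions of `Q(x) ≡ n mod p^k`. -/
noncomputable def localCount (A : Matrix (Fin 4) (Fin 4) ℤ) (p n k : ℕ) : ℕ :=
  Nat.card {x : Fin 4 → ZMod (p ^ k) // Qval A x = (n : ZMod (p ^ k))}

/-- The local density `β_p(Q;n)` exists and is at least `c`. -/
def DensityBound (A : Matrix (Fin 4) (Fin 4) ℤ) (p n : ℕ) (c : ℝ) : Prop :=
  ∃ β : ℝ,
    Filter.Tendsto (fun k => (localCount A p n k : ℝ) / (p : ℝ) ^ (3 * k))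
      Filter.atTop (nhds β) ∧ c ≤ β

/-!
Write `L` for the lattice `ℤ⁴` and count the solutions of `q x ≡ n` modulo `2 ^ k` as cosets of
`2 ^ k L`. Suppose that the polar form of `q` at a solution `y` modulo `2 ^ (2 e + 1)` is divisible
by `2 ^ e` but does not vanish modulo `2 ^ (e + 1)`. By Hensel's lemma, the solutions in the ball
`y + 2 ^ (e + 1) L` then make up their expected share `2 ^ (2 e + 1 - k)` of that ball for every
`k ≥ 2 e + 1`, so the density is at least `2 ^ (-(2 e + 3))`. For `e = 0` and `e = 1` this is good
enough: once the polar form vanishes modulo `2` at a primitive vector, the discriminant is even.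

If neither case applies, then `n` is even, so that every solution lies in the sublattice `M` on
which `q` is even, and `q = 2 q'` on `M`. The densities satisfy
`β(q; n) ≥ 2 / [L : M] * β(q'; n / 2)` and the discriminants `2 ^ 4 disc q' = [L : M] ^ 2 disc q`.
Let `d = ord₂ (disc q)`. If the polar form of `q` is even, then `[L : M]` is at most `2`, and the
drop in the discriminant even yields the bound with `⌊(d - 1) / 2⌋` in place of `⌊(d + 1) / 2⌋`.
Otherwise `[L : M] = 4`, which by itself would lose a factor of `2`; but then the polar form of `q'`
is even, and its better bound makes up for the loss. Induction on `n` completes the argument.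
-/

namespace DyadicDensity

open Filter Module QuadraticMap

section CosetDensity

variable {G G' : Type*} [AddCommGroup G] [AddCommGroup G']

/-- The proportion of the cosets of `H` that meet `S`; for a set that is a union of cosets of `H`
this is its density. -/
noncomputable def cosetDensity (H : AddSubgroup G) (S : Set G) : ℝ :=
  ((QuotientAddGroup.mk : G → G ⧸ H) '' S).ncard / H.index

/-- `S` is a union of cosets of `H`. -/
def IsPeriodic (H : AddSubgroup G) (S : Set G) : Prop :=
  ∀ ⦃x⦄, x ∈ S → ∀ y, y - x ∈ H → y ∈ S

variable {H K : AddSubgroup G} {S T : Set G}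

lemma IsPeriodic.anti (hS : IsPeriodic H S) (hKH : K ≤ H) : IsPeriodic K S :=
  fun _ hx y hy ↦ hS hx y (hKH hy)

lemma IsPeriodic.inter (hS : IsPeriodic H S) (hT : IsPeriodic H T) : IsPeriodic H (S ∩ T) :=
  fun _ hx y hy ↦ ⟨hS hx.1 y hy, hT hx.2 y hy⟩

lemma IsPeriodic.mk_mem_image_mk_iff (hS : IsPeriodic H S) {x : G} :
    (x : G ⧸ H) ∈ (QuotientAddGroup.mk : G → G ⧸ H) '' S ↔ x ∈ S := by
  refine ⟨?_, Set.mem_image_of_mem _⟩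
  rintro ⟨y, hy, hyx⟩
  exact hS hy x (QuotientAddGroup.eq_iff_sub_mem.mp hyx.symm)

lemma cosetDensity_le_of_injOn [H.FiniteIndex] (f : G → G) (hf : Set.MapsTo f S T)
    (hinj : ∀ x ∈ S, ∀ y ∈ S, f x - f y ∈ H → x - y ∈ H) :
    cosetDensity H S ≤ cosetDensity H T := by
  have hcard : ((QuotientAddGroup.mk : G → G ⧸ H) '' S).ncard ≤
      ((QuotientAddGroup.mk : G → G ⧸ H) '' T).ncard := by
    choose! r hrS hr using fun c (hc : c ∈ (QuotientAddGroup.mk : G → G ⧸ H) '' S) ↦ hc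
    refine Set.ncard_le_ncard_of_injOn (fun c ↦ (f (r c) : G ⧸ H))
      (fun c hc ↦ Set.mem_image_of_mem _ (hf (hrS c hc))) (fun c hc d hd hcd ↦ ?_)
    rw [← hr c hc, ← hr d hd, QuotientAddGroup.eq_iff_sub_mem]
    exact hinj _ (hrS c hc) _ (hrS d hd) (QuotientAddGroup.eq_iff_sub_mem.mp hcd)
  unfold cosetDensity
  gcongr

lemma cosetDensity_mono [H.FiniteIndex] (hST : S ⊆ T) : cosetDensity H S ≤ cosetDensity H T :=
  cosetDensity_le_of_injOn id hST fun _ _ _ _ h ↦ h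

lemma cosetDensity_add_cosetDensity_diff [H.FiniteIndex] (hT : IsPeriodic H T) (hTS : T ⊆ S) :
    cosetDensity H T + cosetDensity H (S \ T) = cosetDensity H S := by
  have hdisj : Disjoint ((QuotientAddGroup.mk : G → G ⧸ H) '' T)
      ((QuotientAddGroup.mk : G → G ⧸ H) '' (S \ T)) := by
    rw [Set.disjoint_right]
    rintro _ ⟨x, hx, rfl⟩ hxT
    exact hx.2 (hT.mk_mem_image_mk_iff.mp hxT)
  rw [cosetDensity, cosetDensity, cosetDensity, ← add_div, ← Nat.cast_add,
    ← Set.ncard_union_eq hdisj, ← Set.image_union, Set.union_sdiff_cancel hTS]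

lemma IsPeriodic.cosetDensity_eq [K.FiniteIndex] (hS : IsPeriodic H S) (hKH : K ≤ H) :
    cosetDensity K S = cosetDensity H S := by
  let e := AddSubgroup.quotientEquivProdOfLE hKH
  have himage : e '' ((QuotientAddGroup.mk : G → G ⧸ K) '' S) =
      ((QuotientAddGroup.mk : G → G ⧸ H) '' S) ×ˢ Set.univ := by
    ext ⟨c, d⟩
    obtain ⟨x, hx⟩ := QuotientAddGroup.mk_surjective (e.symm (c, d))
    obtain rfl : (x : G ⧸ H) = c := congrArg Prod.fst (e.eq_symm_apply.mp hx)
    rw [Set.mem_prod, hS.mk_mem_image_mk_iff, ← (hS.anti hKH).mk_mem_image_mk_iff, hx,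
      Equiv.image_eq_preimage_symm]
    simp
  have hcard := Set.ncard_image_of_injective ((QuotientAddGroup.mk : G → G ⧸ K) '' S) e.injective
  rw [himage, Set.ncard_prod, Set.ncard_univ] at hcard
  have hpos : (K.relIndex H : ℝ) ≠ 0 :=
    mod_cast left_ne_zero_of_mul
      ((AddSubgroup.relIndex_mul_index hKH).trans_ne AddSubgroup.FiniteIndex.index_ne_zero)
  rw [cosetDensity, cosetDensity, ← hcard, ← AddSubgroup.relIndex_mul_index hKH, mul_comm,
    Nat.cast_mul, Nat.cast_mul]
  exact mul_div_mul_left _ _ hpos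

lemma cosetDensity_image {i : G' →+ G} (hH : H ≤ i.range) (T : Set G') :
    cosetDensity H (i '' T) = cosetDensity (H.comap i) T / i.range.index := by
  let j := QuotientAddGroup.map (H.comap i) H i le_rfl
  have hj : Function.Injective j := by
    rw [← AddMonoidHom.ker_eq_bot_iff, QuotientAddGroup.ker_map, AddSubgroup.map_eq_bot_iff,
      QuotientAddGroup.ker_mk']
  have himage : (QuotientAddGroup.mk : G → G ⧸ H) '' (i '' T) =
      j '' ((QuotientAddGroup.mk : G' → G' ⧸ H.comap i) '' T) := by
    simp only [Set.image_image]
    rfl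
  rw [cosetDensity, cosetDensity, himage, Set.ncard_image_of_injective _ hj,
    AddSubgroup.index_comap, ← AddSubgroup.relIndex_mul_index hH, Nat.cast_mul, div_div]

lemma cosetDensity_ker (f : G →+ G') (S : Set G) :
    cosetDensity f.ker S = (f '' S).ncard / Nat.card f.range := by
  rw [cosetDensity, AddSubgroup.index_ker,
    ← Set.ncard_image_of_injective _ (QuotientAddGroup.kerLift_injective f), Set.image_image]
  rfl

lemma isPeriodic_coset (H : AddSubgroup G) (y : G) : IsPeriodic H {x | x - y ∈ H} :=
  fun x hx z hz ↦ by simpa using H.add_mem hz hx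

lemma cosetDensity_coset [H.FiniteIndex] (hHK : H ≤ K) (y : G) :
    cosetDensity H {x | x - y ∈ K} = 1 / K.index := by
  have himage : (QuotientAddGroup.mk : G → G ⧸ K) '' {x | x - y ∈ K} = {(y : G ⧸ K)} := by
    refine Set.eq_singleton_iff_unique_mem.mpr ⟨⟨y, by simp, rfl⟩, ?_⟩
    rintro _ ⟨x, hx, rfl⟩
    exact QuotientAddGroup.eq_iff_sub_mem.mpr hx
  rw [(isPeriodic_coset K y).cosetDensity_eq hHK, cosetDensity, himage, Set.ncard_singleton,
    Nat.cast_one]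

lemma cosetDensity_eq_half [H.FiniteIndex] (hT : IsPeriodic H T) (hTS : T ⊆ S) (f : G → G)
    (hinj : ∀ x y, f x - f y ∈ H → x - y ∈ H)
    (hf : ∀ x ∈ S, f x ∈ S) (hswap : ∀ x ∈ S, (f x ∈ T ↔ x ∉ T)) :
    cosetDensity H T = cosetDensity H S / 2 := by
  have hle : cosetDensity H T ≤ cosetDensity H (S \ T) :=
    cosetDensity_le_of_injOn f (fun x hx ↦ ⟨hf x (hTS hx), fun h ↦ (hswap x (hTS hx)).mp h hx⟩)
      fun x _ y _ ↦ hinj x y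
  have hge : cosetDensity H (S \ T) ≤ cosetDensity H T :=
    cosetDensity_le_of_injOn f (fun x hx ↦ (hswap x hx.1).mpr hx.2) fun x _ y _ ↦ hinj x y
  linarith [cosetDensity_add_cosetDensity_diff hT hTS]

end CosetDensity

section Multiples

variable (L : Type*) [AddCommGroup L]

/-- The subgroup `N L` of an abelian group `L`. -/
def multiples (N : ℕ) : AddSubgroup L :=
  (nsmulAddMonoidHom N).range

variable {L}

lemma sub_mem_multiples_iff {N : ℕ} {x y : L} :
    x - y ∈ multiples L N ↔ ∃ w, x = y + (N : ℤ) • w := by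
  simp only [natCast_zsmul]
  exact exists_congr fun w ↦ eq_comm.trans sub_eq_iff_eq_add'

lemma multiples_le_multiples {M N : ℕ} (h : M ∣ N) : multiples L N ≤ multiples L M := by
  obtain ⟨c, rfl⟩ := h
  rintro _ ⟨w, rfl⟩
  exact ⟨c • w, (mul_nsmul' w M c).symm⟩

lemma map_multiples_le {L' : Type*} [AddCommGroup L'] (i : L' →+ L) (N : ℕ) :
    (multiples L' N).map i ≤ multiples L N := by
  rintro _ ⟨_, ⟨w, rfl⟩, rfl⟩
  exact ⟨i w, (map_nsmul i N w).symm⟩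

lemma mem_multiples_of_smul_mem {N : ℕ} {u : ℤ} (hu : IsCoprime u N) {x : L}
    (hx : u • x ∈ multiples L N) : x ∈ multiples L N := by
  obtain ⟨a, b, hab⟩ := hu
  obtain ⟨w, hw⟩ := hx
  refine ⟨a • w + b • x, ?_⟩
  change N • w = u • x at hw
  change N • (a • w + b • x) = x
  rw [← natCast_zsmul] at hw ⊢
  rw [smul_add, smul_comm, hw, smul_smul, smul_smul, ← add_smul, mul_comm (N : ℤ), hab, one_smul]

variable [Module.Free ℤ L] [Module.Finite ℤ L]

lemma index_multiples (N : ℕ) : (multiples L N).index = N ^ finrank ℤ L :=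
  AddSubgroup.index_range_nsmul L N

instance (N : ℕ) [NeZero N] : (multiples L N).FiniteIndex :=
  ⟨by rw [index_multiples]; exact pow_ne_zero _ (NeZero.ne N)⟩

end Multiples

section CongruenceDensity

variable {L : Type*} [AddCommGroup L] (q : QuadraticForm ℤ L) (n : ℤ)

/-- The solutions of the congruence `q x ≡ n` modulo `N`. -/
def congruenceSet (N : ℕ) : Set L :=
  {x | (N : ℤ) ∣ q x - n}

/-- The number of solutions of `q x ≡ n` modulo `N`, relative to the number `N ^ (rank - 1)`
expected of a random function. Its limit along the powers of `p` is the local density at `p`. -/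
noncomputable def densityMod (N : ℕ) : ℝ :=
  N * cosetDensity (multiples L N) (congruenceSet q n N)

variable {q n}

lemma apply_add_smul (x v : L) (c : ℤ) :
    q (x + c • v) = q x + c * polar q x v + c ^ 2 * q v := by
  rw [QuadraticMap.map_add q, QuadraticMap.map_smul, polar_smul_right, smul_eq_mul, smul_eq_mul]
  ring

lemma isPeriodic_congruenceSet (N : ℕ) : IsPeriodic (multiples L N) (congruenceSet q n N) := by
  rintro x ⟨c, hc⟩ y hy
  obtain ⟨w, rfl⟩ := sub_mem_multiples_iff.mp hy
  refine ⟨c + polar q x w + N * q w, ?_⟩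
  rw [apply_add_smul]
  linear_combination hc

lemma congruenceSet_subset {M N : ℕ} (h : M ∣ N) : congruenceSet q n N ⊆ congruenceSet q n M :=
  fun _ hx ↦ (Int.natCast_dvd_natCast.mpr h).trans hx

lemma mem_congruenceSet_two_pow {k : ℕ} {x : L} :
    x ∈ congruenceSet q n (2 ^ k) ↔ 2 ^ k ∣ q x - n := by
  simp [congruenceSet]

lemma two_pow_succ_dvd_add_two_pow_iff {k : ℕ} {a : ℤ} (ha : 2 ^ k ∣ a) :
    2 ^ (k + 1) ∣ a + 2 ^ k ↔ ¬ 2 ^ (k + 1) ∣ a := by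
  obtain ⟨b, rfl⟩ := ha
  have hk : (2 : ℤ) ^ k ≠ 0 := by positivity
  rw [← mul_add_one, pow_succ, mul_dvd_mul_iff_left hk, mul_dvd_mul_iff_left hk]
  omega

variable [Module.Free ℤ L] [Module.Finite ℤ L]

/-- The inductive step of Hensel's lemma, as a statement on densities: a map which changes the
value of `q` by `2 ^ k` interchanges the solutions modulo `2 ^ k` that survive modulo
`2 ^ (k + 1)` with those that do not. -/
lemma cosetDensity_inter_congruenceSet_succ {W : Set L} {k : ℕ}
    (hW : IsPeriodic (multiples L (2 ^ k)) W) (f : L → L)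
    (hinj : ∀ x y, f x - f y ∈ multiples L (2 ^ (k + 1)) → x - y ∈ multiples L (2 ^ (k + 1)))
    (hfW : ∀ x ∈ W, f x ∈ W)
    (hfq : ∀ x ∈ W ∩ congruenceSet q n (2 ^ k), 2 ^ (k + 1) ∣ q (f x) - q x - 2 ^ k) :
    cosetDensity (multiples L (2 ^ (k + 1))) (W ∩ congruenceSet q n (2 ^ (k + 1))) =
      cosetDensity (multiples L (2 ^ k)) (W ∩ congruenceSet q n (2 ^ k)) / 2 := by
  have hle : multiples L (2 ^ (k + 1)) ≤ multiples L (2 ^ k) :=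
    multiples_le_multiples (pow_dvd_pow 2 k.le_succ)
  have hsub : congruenceSet q n (2 ^ (k + 1)) ⊆ congruenceSet q n (2 ^ k) :=
    congruenceSet_subset (pow_dvd_pow 2 k.le_succ)
  have hswap (x) (hx : x ∈ W ∩ congruenceSet q n (2 ^ k)) :
      2 ^ (k + 1) ∣ q (f x) - n ↔ ¬ 2 ^ (k + 1) ∣ q x - n := by
    rw [← two_pow_succ_dvd_add_two_pow_iff (mem_congruenceSet_two_pow.mp hx.2)]
    exact dvd_iff_dvd_of_dvd_sub ((hfq x hx).trans (dvd_of_eq (by ring)))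
  have hmem (x) (hx : x ∈ W ∩ congruenceSet q n (2 ^ k)) : 2 ^ k ∣ q (f x) - n := by
    obtain ⟨c, hc⟩ := hfq x hx
    obtain ⟨d, hd⟩ := mem_congruenceSet_two_pow.mp hx.2
    exact ⟨2 * c + d + 1, by linear_combination hc + hd⟩
  rw [← (hW.inter (isPeriodic_congruenceSet _)).cosetDensity_eq hle]
  refine cosetDensity_eq_half ((hW.anti hle).inter (isPeriodic_congruenceSet _))
    (Set.inter_subset_inter_right W hsub) f hinj
    (fun x hx ↦ ⟨hfW x hx.1, mem_congruenceSet_two_pow.mpr (hmem x hx)⟩) fun x hx ↦ ?_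
  simp only [Set.mem_inter_iff, mem_congruenceSet_two_pow, hfW x hx.1, hx.1, true_and,
    hswap x hx]

/-- Scaling by the unit `1 + 2 ^ a` changes the value `n = 2 ^ t * odd` by `2 ^ (a + t + 1)`. -/
lemma densityMod_two_pow_succ {m : ℤ} (hm : Odd m) {t k : ℕ} (hk : t + 3 ≤ k) :
    densityMod q (2 ^ t * m) (2 ^ (k + 1)) = densityMod q (2 ^ t * m) (2 ^ k) := by
  obtain ⟨b, rfl⟩ := Nat.exists_eq_add_of_le hk
  obtain ⟨c, rfl⟩ := hm
  set u : ℤ := 1 + 2 ^ (b + 2)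
  have hu (j : ℕ) : IsCoprime u (2 ^ j : ℕ) := by
    push_cast
    exact IsCoprime.pow_right ⟨1, -2 ^ (b + 1), by ring⟩
  have hhalf := cosetDensity_inter_congruenceSet_succ (q := q) (n := 2 ^ t * (2 * c + 1))
    (W := Set.univ) (k := t + 3 + b) (fun _ _ _ _ ↦ trivial) (u • ·)
    (fun x y hxy ↦ mem_multiples_of_smul_mem (hu _) (by rwa [smul_sub]))
    (fun _ _ ↦ trivial) fun x hx ↦ by
      obtain ⟨d, hd⟩ := mem_congruenceSet_two_pow.mp hx.2
      refine ⟨c + 4 * 2 ^ b * d + 2 ^ b * (2 * c + 1 + 8 * 2 ^ b * d), ?_⟩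
      rw [QuadraticMap.map_smul, smul_eq_mul]
      linear_combination (u * u - 1) * hd
  simp only [Set.univ_inter] at hhalf
  rw [densityMod, densityMod, hhalf]
  push_cast
  ring

theorem exists_eventually_densityMod_eq (q : QuadraticForm ℤ L) (hn : n ≠ 0) :
    ∃ β, ∀ᶠ k in atTop, densityMod q n (2 ^ k) = β := by
  obtain ⟨t, m, hm, rfl⟩ : ∃ t m, Odd m ∧ n = 2 ^ t * m := by
    obtain ⟨m, hm, hm2⟩ := (Int.finiteMultiplicity_iff.mpr ⟨by simp, hn⟩ :
      FiniteMultiplicity 2 n).exists_eq_pow_mul_and_not_dvd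
    exact ⟨_, m, by simpa [← even_iff_two_dvd] using hm2, hm⟩
  refine ⟨densityMod q (2 ^ t * m) (2 ^ (t + 3)), eventually_atTop.mpr ⟨t + 3, fun k hk ↦ ?_⟩⟩
  induction k, hk using Nat.le_induction with
  | base => rfl
  | succ k hk ih => rw [densityMod_two_pow_succ hm hk, ih]

end CongruenceDensity

section DensityBound

variable {L : Type*} [AddCommGroup L] {q : QuadraticForm ℤ L} {n : ℤ} {b : ℕ}

/-- The local density at `2` of the representations of `n` by `q` is at least `2 ^ (-b)`. As the
approximations of that density are eventually constant, this is a condition on large moduli. -/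
def HasDensityBound (q : QuadraticForm ℤ L) (n : ℤ) (b : ℕ) : Prop :=
  ∀ᶠ k in atTop, (1 / 2 : ℝ) ^ b ≤ densityMod q n (2 ^ k)

lemma HasDensityBound.mono {b' : ℕ} (h : HasDensityBound q n b) (hb : b ≤ b') :
    HasDensityBound q n b' :=
  Eventually.mono h fun _ hk ↦
    (pow_le_pow_of_le_one (by norm_num) (by norm_num) hb).trans hk

lemma two_pow_succ_dvd_apply_translate_sub {x v : L} {e j : ℕ} (hx : 2 ^ e ∣ polar q x v)
    (hx' : ¬ 2 ^ (e + 1) ∣ polar q x v) :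
    2 ^ (2 * e + 1 + j + 1) ∣
      q (x + (2 ^ (e + 1 + j) : ℤ) • v) - q x - 2 ^ (2 * e + 1 + j) := by
  obtain ⟨c, hc⟩ := hx
  obtain ⟨d, rfl⟩ : Odd c := by
    rw [← Int.not_even_iff_odd, even_iff_two_dvd]
    rintro ⟨d, rfl⟩
    exact hx' ⟨d, by rw [hc]; ring⟩
  refine ⟨d + 2 ^ j * q v, ?_⟩
  rw [apply_add_smul, hc]
  ring

lemma coset_subset_congruenceSet {y : L} {e : ℕ} (hy : ∀ z, 2 ^ e ∣ polar q y z)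
    (hyn : 2 ^ (2 * e + 1) ∣ q y - n) :
    {x | x - y ∈ multiples L (2 ^ (e + 1))} ⊆ congruenceSet q n (2 ^ (2 * e + 1)) := by
  intro x hx
  obtain ⟨w, rfl⟩ := sub_mem_multiples_iff.mp hx
  obtain ⟨c, hc⟩ := hyn
  obtain ⟨d, hd⟩ := hy w
  refine mem_congruenceSet_two_pow.mpr ⟨c + d + 2 * q w, ?_⟩
  rw [apply_add_smul]
  push_cast
  linear_combination hc + 2 ^ (e + 1) * hd

variable [Module.Free ℤ L] [Module.Finite ℤ L]

/-- On the ball `y + 2 ^ (e + 1) L`, translation by `2 ^ (k - e) v` changes the value of `q` by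
`2 ^ k` modulo `2 ^ (k + 1)`. -/
lemma cosetDensity_ball_inter_congruenceSet {y v : L} {e : ℕ} (hy : ∀ z, 2 ^ e ∣ polar q y z)
    (hv : ¬ 2 ^ (e + 1) ∣ polar q y v) (hyn : 2 ^ (2 * e + 1) ∣ q y - n) (j : ℕ) :
    cosetDensity (multiples L (2 ^ (2 * e + 1 + j)))
        ({x | x - y ∈ multiples L (2 ^ (e + 1))} ∩ congruenceSet q n (2 ^ (2 * e + 1 + j))) =
      ((2 : ℝ) ^ (finrank ℤ L * (e + 1)))⁻¹ / 2 ^ j := by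
  set W : Set L := {x | x - y ∈ multiples L (2 ^ (e + 1))}
  have hper : IsPeriodic (multiples L (2 ^ (e + 1))) W := isPeriodic_coset _ y
  have hle (j : ℕ) : multiples L (2 ^ (2 * e + 1 + j)) ≤ multiples L (2 ^ (e + 1)) :=
    multiples_le_multiples (pow_dvd_pow 2 (by omega))
  induction j with
  | zero =>
    rw [add_zero, Set.inter_eq_left.mpr (coset_subset_congruenceSet hy hyn),
      cosetDensity_coset (hle 0), index_multiples]
    simp [pow_mul']
  | succ j ih =>
    have hpolar {x : L} (hx : x ∈ W) : 2 ^ (e + 1) ∣ polar q x v - polar q y v := by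
      obtain ⟨w, rfl⟩ := sub_mem_multiples_iff.mp hx
      rw [polar_add_left, polar_smul_left, add_sub_cancel_left, Nat.cast_pow]
      exact dvd_mul_right _ _
    rw [← add_assoc, pow_succ (2 : ℝ) j, ← div_div, ← ih]
    refine cosetDensity_inter_congruenceSet_succ (hper.anti (hle j))
      (· + (2 ^ (e + 1 + j) : ℤ) • v) (fun x z hxz ↦ by simpa using hxz)
      (fun x hx ↦ hper hx _ (sub_mem_multiples_iff.mpr ⟨(2 ^ j : ℤ) • v, ?_⟩)) fun x hx ↦
        two_pow_succ_dvd_apply_translate_sub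
          ((dvd_iff_dvd_of_dvd_sub ((pow_dvd_pow 2 e.le_succ).trans (hpolar hx.1))).mpr (hy v))
          (mt (dvd_iff_dvd_of_dvd_sub (hpolar hx.1)).mp hv)
    push_cast
    rw [smul_smul, ← pow_add]

theorem hasDensityBound_of_polar {y v : L} {e : ℕ} (hy : ∀ z, 2 ^ e ∣ polar q y z)
    (hv : ¬ 2 ^ (e + 1) ∣ polar q y v) (hyn : 2 ^ (2 * e + 1) ∣ q y - n)
    (hb : finrank ℤ L * (e + 1) ≤ 2 * e + 1 + b) : HasDensityBound q n b := by
  filter_upwards [eventually_ge_atTop (2 * e + 1)] with k hk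
  obtain ⟨j, rfl⟩ := Nat.exists_eq_add_of_le hk
  calc (1 / 2 : ℝ) ^ b
      = 2 ^ (2 * e + 1 + j) * ((2 ^ (2 * e + 1 + b))⁻¹ / 2 ^ j) := by
        simp only [pow_add, one_div, inv_pow]
        field_simp
    _ ≤ 2 ^ (2 * e + 1 + j) * ((2 ^ (finrank ℤ L * (e + 1)))⁻¹ / 2 ^ j) := by
        gcongr
        norm_num
    _ ≤ densityMod q n (2 ^ (2 * e + 1 + j)) := by
        rw [← cosetDensity_ball_inter_congruenceSet hy hv hyn j, densityMod]
        push_cast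
        gcongr
        exact cosetDensity_mono Set.inter_subset_right

variable {M : Submodule ℤ L} {q' : QuadraticForm ℤ M} {n' : ℤ}

lemma densityMod_le_of_eq_two_mul [M.toAddSubgroup.FiniteIndex] (hq : ∀ x : M, q x = 2 * q' x)
    (N : ℕ) [NeZero N] :
    2 / M.toAddSubgroup.index * densityMod q' n' N ≤ densityMod q (2 * n') (2 * N) := by
  let i : M →+ L := M.subtype.toAddMonoidHom
  have hi : Function.Injective i := Subtype.val_injective
  have hrange : i.range = M.toAddSubgroup := by
    ext; simp [i]
  let H : AddSubgroup L := (multiples M (2 * N)).map i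
  have hH : H.FiniteIndex := ⟨by
    rw [AddSubgroup.index_map, (AddMonoidHom.ker_eq_bot_iff i).mpr hi, sup_bot_eq, hrange]
    exact mul_ne_zero AddSubgroup.FiniteIndex.index_ne_zero AddSubgroup.FiniteIndex.index_ne_zero⟩
  have himage : i '' congruenceSet q' n' N ⊆ congruenceSet q (2 * n') (2 * N) := by
    rintro _ ⟨x, ⟨c, hc⟩, rfl⟩
    refine ⟨c, ?_⟩
    rw [show q (i x) = 2 * q' x from hq x]
    push_cast
    linear_combination 2 * hc
  have hdens : cosetDensity (multiples M N) (congruenceSet q' n' N) / M.toAddSubgroup.index ≤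
      cosetDensity (multiples L (2 * N)) (congruenceSet q (2 * n') (2 * N)) :=
    calc _ = cosetDensity (multiples M (2 * N)) (congruenceSet q' n' N) / i.range.index := by
          rw [hrange, (isPeriodic_congruenceSet N).cosetDensity_eq
            (multiples_le_multiples (dvd_mul_left N 2))]
      _ = cosetDensity H (i '' congruenceSet q' n' N) := by
          rw [cosetDensity_image (AddSubgroup.map_le_range i _),
            AddSubgroup.comap_map_eq_self_of_injective hi]
      _ ≤ cosetDensity H (congruenceSet q (2 * n') (2 * N)) := cosetDensity_mono himage
      _ = _ := (isPeriodic_congruenceSet _).cosetDensity_eq (map_multiples_le i _)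
  calc 2 / M.toAddSubgroup.index * densityMod q' n' N
      = (2 * N : ℕ) * (cosetDensity (multiples M N) (congruenceSet q' n' N) /
          M.toAddSubgroup.index) := by rw [densityMod]; push_cast; ring
    _ ≤ densityMod q (2 * n') (2 * N) := by rw [densityMod]; gcongr

theorem HasDensityBound.of_eq_two_mul {s b' : ℕ} (h : HasDensityBound q' n' b')
    (hM : M.toAddSubgroup.index = 2 ^ s) (hq : ∀ x : M, q x = 2 * q' x) (hb : b' + s ≤ b + 1) :
    HasDensityBound q (2 * n') b := by
  have hfin : M.toAddSubgroup.FiniteIndex := ⟨by simp [hM]⟩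
  have hshift : ∀ᶠ k in atTop, (1 / 2 : ℝ) ^ b ≤ densityMod q (2 * n') (2 ^ (k + 1)) := by
    filter_upwards [h] with k hk
    calc (1 / 2 : ℝ) ^ b = 2 * (1 / 2) ^ (b + 1) := by ring
      _ ≤ 2 * (1 / 2) ^ (b' + s) := by
          gcongr ?_ * ?_
          exact pow_le_pow_of_le_one (by norm_num) (by norm_num) hb
      _ = 2 / M.toAddSubgroup.index * (1 / 2) ^ b' := by
          rw [hM, pow_add, one_div_pow (2 : ℝ) s]
          push_cast
          ring
      _ ≤ 2 / M.toAddSubgroup.index * densityMod q' n' (2 ^ k) := by gcongr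
      _ ≤ _ := by
          rw [pow_succ']
          exact densityMod_le_of_eq_two_mul hq _
  rwa [HasDensityBound, ← map_add_atTop_eq_nat 1, eventually_map]

end DensityBound

section Discriminant

variable {L : Type*} [AddCommGroup L] {q : QuadraticForm ℤ L}

lemma polar_eq_two_mul_polar {M : Submodule ℤ L} {q' : QuadraticForm ℤ M}
    (hq : ∀ x : M, q x = 2 * q' x) (x y : M) : polar q (x : L) y = 2 * polar q' x y := by
  simp only [polar, ← Submodule.coe_add, hq]
  ring

lemma exists_eq_two_mul (h : ∀ x, 2 ∣ q x) :
    ∃ q' : QuadraticForm ℤ L, ∀ x, q x = 2 * q' x := by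
  choose f hf using h
  have hpolar (x y : L) : polar q x y = 2 * polar f x y := by
    simp only [polar, hf]
    ring
  refine ⟨.ofPolar f (fun a x ↦ ?_) (fun x x' y ↦ ?_) (fun a x y ↦ ?_), hf⟩ <;>
    apply mul_left_cancel₀ (two_ne_zero' ℤ)
  · rw [← hf, QuadraticMap.map_smul, hf, smul_eq_mul, smul_eq_mul, mul_left_comm]
  · rw [mul_add, ← hpolar, ← hpolar, ← hpolar, polar_add_left]
  · rw [← hpolar, polar_smul_left, hpolar, smul_eq_mul, smul_eq_mul, mul_left_comm]

variable (q)

/-- The matrix of polar values of `q` on a family of vectors; on a basis, this is the Gram matrix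
of `q`, with diagonal entries `2 * q (w i)`. -/
def polarGram {ι : Type*} (w : ι → L) : Matrix ι ι ℤ :=
  Matrix.of fun i j ↦ polar q (w i) (w j)

section Basis

variable {ι : Type*} [Fintype ι]

lemma sum_repr_mul_polar (b : Basis ι ℤ L) (x y : L) :
    ∑ i, b.repr x i * polar q (b i) y = polar q x y := by
  conv_rhs => rw [← b.sum_repr x, ← polarBilin_apply_apply, map_sum]
  simp

lemma polarGram_mulVec_repr (b : Basis ι ℤ L) (x : L) :
    (polarGram q b).mulVec (b.repr x) = fun i ↦ polar q (b i) x := by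
  funext i
  rw [polar_comm, ← sum_repr_mul_polar q b]
  simp only [Matrix.mulVec, dotProduct, polarGram, Matrix.of_apply, polar_comm _ (b i), mul_comm]

lemma det_polarGram_eq_det_sq_mul [DecidableEq ι] (b : Basis ι ℤ L) (w : ι → L) :
    (polarGram q w).det = b.det w ^ 2 * (polarGram q b).det := by
  have hcol (k j : ι) : (polarGram q b * b.toMatrix w) k j = polar q (b k) (w j) :=
    congrFun (polarGram_mulVec_repr q b (w j)) k
  have hmul : polarGram q w = (b.toMatrix w).transpose * (polarGram q b * b.toMatrix w) := by
    ext i j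
    simp only [Matrix.mul_apply (M := (b.toMatrix w).transpose), hcol, Matrix.transpose_apply,
      Basis.toMatrix_apply, sum_repr_mul_polar]
    rfl
  rw [hmul, Matrix.det_mul, Matrix.det_mul, Matrix.det_transpose, Basis.det_apply]
  ring

end Basis

variable [Module.Free ℤ L] [Module.Finite ℤ L]

/-- The discriminant of `q`: the determinant of its Gram matrix, which does not depend on the
basis. -/
noncomputable def polarDiscr : ℤ :=
  (polarGram q (finBasis ℤ L)).det

lemma det_polarGram_eq_polarDiscr {ι : Type*} [Fintype ι] [DecidableEq ι] (b : Basis ι ℤ L) :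
    (polarGram q b).det = polarDiscr q := by
  let e : ι ≃ Fin (finrank ℤ L) := b.indexEquiv (finBasis ℤ L)
  have hunit : (finBasis ℤ L).det (b.reindex e) ^ 2 = 1 :=
    (pow_two _).trans (Int.isUnit_mul_self (Basis.isUnit_det _ _))
  rw [polarDiscr, ← Matrix.det_submatrix_equiv_self e.symm]
  have := det_polarGram_eq_det_sq_mul q (finBasis ℤ L) (b.reindex e)
  rw [hunit, one_mul] at this
  rw [← this]
  congr 1
  ext i j
  simp [polarGram]

variable {q}

lemma dvd_polarDiscr_of_forall_dvd_polar {p : ℕ} [Fact p.Prime] {x : L} (hx : x ∉ multiples L p)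
    (hpolar : ∀ z, (p : ℤ) ∣ polar q x z) : (p : ℤ) ∣ polarDiscr q := by
  let b := finBasis ℤ L
  have hne : (fun i ↦ (b.repr x i : ZMod p)) ≠ 0 := fun h ↦ by
    choose c hc using fun i ↦ (ZMod.intCast_zmod_eq_zero_iff_dvd _ p).mp (congrFun h i)
    refine hx ⟨∑ i, c i • b i, ?_⟩
    change p • ∑ i, c i • b i = x
    rw [← natCast_zsmul, Finset.smul_sum, ← b.sum_repr x]
    simp only [smul_smul, hc]
  rw [← ZMod.intCast_zmod_eq_zero_iff_dvd, polarDiscr, ← eq_intCast (Int.castRingHom (ZMod p)),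
    RingHom.map_det]
  refine Matrix.exists_mulVec_eq_zero_iff.mp ⟨_, hne, ?_⟩
  funext i
  have hi := congrArg (Int.castRingHom (ZMod p)) (congrFun (polarGram_mulVec_repr q b x) i)
  rw [RingHom.map_mulVec] at hi
  exact hi.trans ((ZMod.intCast_zmod_eq_zero_iff_dvd _ p).mpr (polar_comm q x _ ▸ hpolar _))

lemma pow_finrank_dvd_polarDiscr {c : ℤ} (h : ∀ x y, c ∣ polar q x y) :
    c ^ finrank ℤ L ∣ polarDiscr q := by
  choose g hg using h
  have hsmul : polarGram q (finBasis ℤ L) =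
      c • Matrix.of fun i j ↦ g (finBasis ℤ L i) (finBasis ℤ L j) := by
    ext i j
    simp [polarGram, hg]
  rw [polarDiscr, hsmul, Matrix.det_smul, Fintype.card_fin]
  exact dvd_mul_right _ _

lemma two_pow_mul_polarDiscr {M : Submodule ℤ L} [M.toAddSubgroup.FiniteIndex]
    {q' : QuadraticForm ℤ M} (hq : ∀ x : M, q x = 2 * q' x) :
    2 ^ finrank ℤ L * polarDiscr q' = M.toAddSubgroup.index ^ 2 * polarDiscr q := by
  have hfinrank : finrank ℤ M = finrank ℤ L := M.toAddSubgroup.finrank_eq_of_finiteIndex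
  let b := (finBasis ℤ M).reindex (finCongr hfinrank)
  have hgram : polarGram q (fun i ↦ (b i : L)) = (2 : ℤ) • polarGram q' b := by
    ext i j
    exact polar_eq_two_mul_polar hq _ _
  have hindex : (M.toAddSubgroup.index : ℤ) ^ 2 = (finBasis ℤ L).det (fun i ↦ (b i : L)) ^ 2 := by
    rw [← Int.natAbs_sq ((finBasis ℤ L).det _)]
    congr 2
    exact AddSubgroup.index_eq_natAbs_det _ M.toAddSubgroup b
  have hdet := det_polarGram_eq_det_sq_mul q (finBasis ℤ L) (fun i ↦ (b i : L))
  rwa [hgram, Matrix.det_smul, Fintype.card_fin, det_polarGram_eq_polarDiscr, ← hindex] at hdet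

end Discriminant

section EvenSublattice

variable {L : Type*} [AddCommGroup L] {q : QuadraticForm ℤ L} {n : ℤ} {M : Submodule ℤ L}

/-- `n` is primitively represented by `q` over the `2`-adic integers. By compactness this is
solvability of `q x ≡ n` modulo all powers of `2` by vectors `x` outside `2 L`. -/
def IsPrimitivelyRepresented (q : QuadraticForm ℤ L) (n : ℤ) : Prop :=
  ∀ k : ℕ, ∃ x ∉ multiples L 2, 2 ^ k ∣ q x - n

/-- `M` is the set of vectors on which `q` is even. -/
def IsEvenSublattice (q : QuadraticForm ℤ L) (M : Submodule ℤ L) : Prop :=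
  ∀ x, x ∈ M ↔ 2 ∣ q x

lemma IsEvenSublattice.exists_eq_two_mul (hM : IsEvenSublattice q M) :
    ∃ q' : QuadraticForm ℤ M, ∀ x : M, q x = 2 * q' x :=
  DyadicDensity.exists_eq_two_mul (q := q.comp M.subtype) fun x ↦ (hM x).mp x.2

lemma IsPrimitivelyRepresented.of_eq_two_mul {q' : QuadraticForm ℤ M} {n' : ℤ}
    (h : IsPrimitivelyRepresented q (2 * n')) (hM : IsEvenSublattice q M)
    (hq : ∀ x : M, q x = 2 * q' x) : IsPrimitivelyRepresented q' n' := by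
  intro k
  obtain ⟨x, hx, c, hc⟩ := h (k + 1)
  have hxM : x ∈ M := (hM x).mpr ⟨2 ^ k * c + n', by linear_combination hc⟩
  refine ⟨⟨x, hxM⟩, ?_, c, ?_⟩
  · rintro ⟨w, hw⟩
    exact hx ⟨w, congrArg Subtype.val hw⟩
  · apply mul_left_cancel₀ (two_ne_zero' ℤ)
    rw [mul_sub, ← hq]
    linear_combination hc

lemma exists_isEvenSublattice_of_even_polar (h : ∀ x y, 2 ∣ polar q x y) :
    ∃ M, IsEvenSublattice q M ∧ ∃ s ≤ 1, M.toAddSubgroup.index = 2 ^ s := by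
  let φ : L →+ ZMod 2 :=
    { toFun x := (q x : ZMod 2)
      map_zero' := by simp
      map_add' x y := by
        rw [QuadraticMap.map_add q, Int.cast_add, Int.cast_add,
          (ZMod.intCast_zmod_eq_zero_iff_dvd _ 2).mpr (h x y), add_zero] }
  refine ⟨AddSubgroup.toIntSubmodule φ.ker,
    fun x ↦ ZMod.intCast_zmod_eq_zero_iff_dvd (q x) 2, ?_⟩
  have hindex : φ.ker.index ∣ 2 ^ 1 := by
    rw [AddSubgroup.index_ker]
    simpa using AddSubgroup.card_addSubgroup_dvd_card φ.range
  exact (Nat.dvd_prime_pow Nat.prime_two).mp hindex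

/-- The vectors on which `q` is even are those orthogonal to `u` and `v` modulo `2`. -/
lemma exists_isEvenSublattice_of_odd_polar (h : ∀ y, 2 ∣ q y → ∀ w, 2 ∣ polar q y w) {u v : L}
    (huv : ¬ 2 ∣ polar q u v) : ∃ M, IsEvenSublattice q M ∧ M.toAddSubgroup.index = 2 ^ 2 := by
  let ψ (u : L) : L →+ ZMod 2 := (Int.castAddHom (ZMod 2)).comp (polarBilin q u).toAddMonoidHom
  let φ : L →+ ZMod 2 × ZMod 2 := (ψ u).prod (ψ v)
  have hψ (x y : L) : ψ x y = 0 ↔ 2 ∣ polar q x y := ZMod.intCast_zmod_eq_zero_iff_dvd _ 2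
  have hself (x : L) : ψ x x = 0 := (hψ x x).mpr (by simp)
  have hone : ψ u v = 1 := Fin.eq_one_of_ne_zero _ ((hψ u v).not.mpr huv)
  have hone' : ψ v u = 1 := Fin.eq_one_of_ne_zero _ ((hψ v u).not.mpr (by rwa [polar_comm]))
  have hsurj : φ.range = ⊤ := by
    refine AddMonoidHom.range_eq_top.mpr fun ⟨a, b⟩ ↦ ⟨a.val • v + b.val • u, ?_⟩
    simp [φ, hself, hone, hone']
  refine ⟨AddSubgroup.toIntSubmodule φ.ker, fun x ↦ ?_, ?_⟩
  · change φ x = 0 ↔ _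
    simp only [φ, AddMonoidHom.prod_apply, Prod.mk_eq_zero, hψ]
    refine ⟨fun ⟨hux, hvx⟩ ↦ ?_, fun hx ↦ ?_⟩
    · by_contra hx
      have hu : ¬ 2 ∣ q u := fun hu ↦ huv (h u hu v)
      have hxu : 2 ∣ q (x + u) := by
        rw [QuadraticMap.map_add q, polar_comm]
        exact dvd_add (by omega) hux
      have := h _ hxu v
      rw [polar_add_left, polar_comm] at this
      exact huv ((dvd_add_right hvx).mp this)
    · exact ⟨polar_comm q u x ▸ h x hx u, polar_comm q v x ▸ h x hx v⟩
  · change φ.ker.index = 2 ^ 2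
    rw [AddSubgroup.index_ker, hsurj]
    simp

lemma relIndex_dvd_two {G : Type*} [AddGroup G] {H K T : AddSubgroup G} (hHT : H ≤ T)
    (hHK : H ≤ K) (hindex : H.relIndex K = 2 ^ 2) {x : G} (hxT : x ∈ T) (hxK : x ∈ K)
    (hxH : x ∉ H) : T.relIndex K ∣ 2 := by
  have hne : H.relIndex (T ⊓ K) ≠ 1 := fun h ↦ hxH (AddSubgroup.relIndex_eq_one.mp h ⟨hxT, hxK⟩)
  have hmul := AddSubgroup.relIndex_mul_relIndex H (T ⊓ K) K (le_inf hHT hHK) inf_le_right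
  rw [hindex, AddSubgroup.inf_relIndex_right] at hmul
  obtain ⟨i, hi, hTK⟩ :=
    (Nat.dvd_prime_pow Nat.prime_two).mp ⟨_, ((mul_comm _ _).trans hmul).symm⟩
  rw [hTK] at hmul ⊢
  interval_cases i <;> omega

/-- The vectors whose polar pairing with every element of `M` is divisible by `c`. -/
def polarOrthogonal (q : QuadraticForm ℤ L) (c : ℤ) (M : Submodule ℤ L) : AddSubgroup L where
  carrier := {y | ∀ z ∈ M, c ∣ polar q y z}
  add_mem' ha hb z hz := by
    rw [polar_add_left]
    exact dvd_add (ha z hz) (hb z hz)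
  zero_mem' z _ := by simp
  neg_mem' ha z hz := by
    rw [polar_neg_left]
    exact (ha z hz).neg_right

/-- Two elements outside a subgroup of index `2` differ by an element of it. -/
lemma four_dvd_polar_of_relIndex_dvd_two (hM : IsEvenSublattice q M)
    (h : (polarOrthogonal q 4 M).relIndex M.toAddSubgroup ∣ 2) {y z : L} (hy : y ∈ M)
    (hz : z ∈ M) : 4 ∣ polar q y z := by
  set T := polarOrthogonal q 4 M
  obtain ⟨a, -, ha⟩ := AddSubgroup.relIndex_dvd_two_iff.mp h
  have hcases : y ∈ T ∨ z ∈ T ∨ y - z ∈ T := by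
    rcases ha y hy with hya | hyT
    · rcases ha z hz with hza | hzT
      · exact .inr (.inr (by simpa using T.sub_mem hya hza))
      · exact .inr (.inl hzT)
    · exact .inl hyT
  obtain hyT | hzT | hyzT := hcases
  · exact hyT z hz
  · exact polar_comm q z y ▸ hzT y hy
  · have hsub := hyzT z hz
    have hqz := (hM z).mp hz
    rw [polar_sub_left, polar_self, nsmul_eq_mul] at hsub
    omega

variable [Module.Free ℤ L] [Module.Finite ℤ L]

lemma relIndex_polarOrthogonal_dvd_two (hL : finrank ℤ L = 4) (hM : IsEvenSublattice q M)
    (hindex : M.toAddSubgroup.index = 2 ^ 2) (h : ∀ y ∈ M, ∀ w, 2 ∣ polar q y w) {x : L}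
    (hx : x ∉ multiples L 2) (hx4 : ∀ z, 4 ∣ polar q x z) :
    (polarOrthogonal q 4 M).relIndex M.toAddSubgroup ∣ 2 := by
  have hleM : multiples L 2 ≤ M.toAddSubgroup := by
    rintro _ ⟨w, rfl⟩
    change 2 • w ∈ M
    rw [hM, ← natCast_zsmul, QuadraticMap.map_smul, smul_eq_mul, mul_assoc]
    exact dvd_mul_right _ _
  have hleT : multiples L 2 ≤ polarOrthogonal q 4 M := by
    rintro _ ⟨w, rfl⟩ z hz
    change 4 ∣ polar q (2 • w) z
    rw [polar_comm, ← natCast_zsmul, polar_smul_right, smul_eq_mul]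
    exact mul_dvd_mul_left 2 (h z hz w)
  have hxM : x ∈ M := by
    have hself := hx4 x
    rw [polar_self, nsmul_eq_mul] at hself
    rw [hM]
    omega
  have hmul := AddSubgroup.relIndex_mul_index hleM
  rw [index_multiples, hL, hindex] at hmul
  exact relIndex_dvd_two hleT hleM (by omega) (fun z _ ↦ hx4 z) hxM hx

lemma exists_isEvenSublattice_of_four_dvd_polar (hL : finrank ℤ L = 4)
    (h : ∀ y, 2 ∣ q y → ∀ w, 2 ∣ polar q y w) {u v x : L} (huv : ¬ 2 ∣ polar q u v)
    (hx : x ∉ multiples L 2) (hx4 : ∀ z, 4 ∣ polar q x z) :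
    ∃ M, IsEvenSublattice q M ∧ M.toAddSubgroup.index = 2 ^ 2 ∧
      ∀ y ∈ M, ∀ z ∈ M, 4 ∣ polar q y z := by
  obtain ⟨M, hM, hindex⟩ := exists_isEvenSublattice_of_odd_polar h huv
  have hT := relIndex_polarOrthogonal_dvd_two hL hM hindex (fun y hy ↦ h y ((hM y).mp hy)) hx hx4
  exact ⟨M, hM, hindex, fun y hy z hz ↦ four_dvd_polar_of_relIndex_dvd_two hM hT hy hz⟩

end EvenSublattice

section Induction

/-- The `2`-adic valuation of the discriminant of `q`. -/
noncomputable def ordDiscr {L : Type*} [AddCommGroup L] [Module.Free ℤ L] [Module.Finite ℤ L]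
    (q : QuadraticForm ℤ L) : ℕ :=
  padicValInt 2 (polarDiscr q)

section Halving

variable {L : Type*} [AddCommGroup L] [Module.Free ℤ L] [Module.Finite ℤ L]
  {q : QuadraticForm ℤ L}

lemma le_ordDiscr_of_two_pow_dvd (hq : polarDiscr q ≠ 0) {a : ℕ} (h : 2 ^ a ∣ polarDiscr q) :
    a ≤ ordDiscr q :=
  ((padicValInt_dvd_iff a _).mp h).resolve_left hq

variable {M : Submodule ℤ L} {q' : QuadraticForm ℤ M}

lemma polarDiscr_ne_zero_of_eq_two_mul [M.toAddSubgroup.FiniteIndex]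
    (hq : ∀ x : M, q x = 2 * q' x) (hne : polarDiscr q ≠ 0) : polarDiscr q' ≠ 0 := by
  refine right_ne_zero_of_mul ((two_pow_mul_polarDiscr hq).trans_ne (mul_ne_zero ?_ hne))
  exact mod_cast pow_ne_zero 2 AddSubgroup.FiniteIndex.index_ne_zero

lemma ordDiscr_add_finrank [M.toAddSubgroup.FiniteIndex] {s : ℕ} (hq : ∀ x : M, q x = 2 * q' x)
    (hne : polarDiscr q ≠ 0) (hM : M.toAddSubgroup.index = 2 ^ s) :
    ordDiscr q' + finrank ℤ L = ordDiscr q + 2 * s := by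
  have hpow (j : ℕ) : padicValInt 2 (2 ^ j) = j := by simp [padicValInt, Int.natAbs_pow]
  have h := congrArg (padicValInt 2) (two_pow_mul_polarDiscr hq)
  rw [hM, Nat.cast_pow, ← pow_mul, Nat.cast_ofNat, padicValInt.mul (by positivity) hne,
    padicValInt.mul (by positivity) (polarDiscr_ne_zero_of_eq_two_mul hq hne), hpow, hpow] at h
  rw [ordDiscr, ordDiscr]
  omega

lemma IsEvenSublattice.exists_ordDiscr_add_finrank_eq (hM : IsEvenSublattice q M)
    (hne : polarDiscr q ≠ 0) {s : ℕ} (hindex : M.toAddSubgroup.index = 2 ^ s) :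
    ∃ q' : QuadraticForm ℤ M, (∀ x : M, q x = 2 * q' x) ∧ finrank ℤ M = finrank ℤ L ∧
      polarDiscr q' ≠ 0 ∧ ordDiscr q' + finrank ℤ L = ordDiscr q + 2 * s := by
  obtain ⟨q', hq'⟩ := hM.exists_eq_two_mul
  have : M.toAddSubgroup.FiniteIndex := ⟨by simp [hindex]⟩
  exact ⟨q', hq', M.toAddSubgroup.finrank_eq_of_finiteIndex,
    polarDiscr_ne_zero_of_eq_two_mul hq' hne, ordDiscr_add_finrank hq' hne hindex⟩

end Halving

mutual

theorem hasDensityBound_of_even_polar {L : Type*} [AddCommGroup L] [Module.Free ℤ L]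
    [Module.Finite ℤ L] {q : QuadraticForm ℤ L} {n : ℤ} (hL : finrank ℤ L = 4)
    (hq : polarDiscr q ≠ 0) (hn : n ≠ 0) (h : IsPrimitivelyRepresented q n)
    (hpolar : ∀ x y, 2 ∣ polar q x y) : HasDensityBound q n (4 + (ordDiscr q - 1) / 2) := by
  have hord : 4 ≤ ordDiscr q :=
    le_ordDiscr_of_two_pow_dvd hq (hL ▸ pow_finrank_dvd_polarDiscr hpolar)
  rcases Int.even_or_odd' n with ⟨n', rfl | rfl⟩
  · obtain ⟨M, hM, s, hs, hindex⟩ := exists_isEvenSublattice_of_even_polar hpolar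
    obtain ⟨q', hq', hrank, hne, hord'⟩ := hM.exists_ordDiscr_add_finrank_eq hq hindex
    rw [hL] at hrank hord'
    have hbound := hasDensityBound hrank hne (right_ne_zero_of_mul hn) (h.of_eq_two_mul hM hq')
    exact hbound.of_eq_two_mul hindex hq' (by omega)
  · obtain ⟨x, -, hx⟩ := h 3
    refine hasDensityBound_of_polar (e := 1) (y := x) (v := x) (fun z ↦ hpolar x z) ?_ hx (by omega)
    rw [polar_self, nsmul_eq_mul]
    omega
termination_by (n.natAbs, 0)
decreasing_by exact Prod.Lex.left _ _ (by omega)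

theorem hasDensityBound {L : Type*} [AddCommGroup L] [Module.Free ℤ L]
    [Module.Finite ℤ L] {q : QuadraticForm ℤ L} {n : ℤ} (hL : finrank ℤ L = 4)
    (hq : polarDiscr q ≠ 0) (hn : n ≠ 0) (h : IsPrimitivelyRepresented q n) :
    HasDensityBound q n (4 + (ordDiscr q + 1) / 2) := by
  obtain ⟨x, hx, hxn⟩ := h 3
  by_cases hodd : ∃ y w, 2 ∣ q y - n ∧ ¬ 2 ∣ polar q y w
  · obtain ⟨y, w, hyn, hyw⟩ := hodd
    exact hasDensityBound_of_polar (e := 0) (fun z ↦ one_dvd _) hyw hyn (by omega)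
  push Not at hodd
  by_cases hpolar : ∀ y z, 2 ∣ polar q y z
  · exact (hasDensityBound_of_even_polar hL hq hn h hpolar).mono (by omega)
  push Not at hpolar
  obtain ⟨u, v, huv⟩ := hpolar
  have hx2 (z : L) : 2 ∣ polar q x z := hodd x z (by omega)
  have hord : 1 ≤ ordDiscr q :=
    le_ordDiscr_of_two_pow_dvd hq (dvd_polarDiscr_of_forall_dvd_polar (p := 2) hx hx2)
  by_cases hx4 : ∀ z, 4 ∣ polar q x z
  · have hxx := hx4 x
    rw [polar_self, nsmul_eq_mul] at hxx
    obtain ⟨n', rfl⟩ : 2 ∣ n := by omega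
    obtain ⟨M, hM, hindex, hM4⟩ := exists_isEvenSublattice_of_four_dvd_polar hL
      (fun y hy w ↦ hodd y w (by omega)) huv hx hx4
    obtain ⟨q', hq', hrank, hne, hord'⟩ := hM.exists_ordDiscr_add_finrank_eq hq hindex
    rw [hL] at hrank hord'
    have hbound := hasDensityBound_of_even_polar hrank hne (right_ne_zero_of_mul hn)
      (h.of_eq_two_mul hM hq') fun y z ↦ by
        have := hM4 y y.2 z z.2
        rw [polar_eq_two_mul_polar hq'] at this
        omega
    exact hbound.of_eq_two_mul hindex hq' (by omega)
  · push Not at hx4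
    obtain ⟨z, hz⟩ := hx4
    exact hasDensityBound_of_polar (e := 1) hx2 hz hxn (by omega)
termination_by (n.natAbs, 1)
decreasing_by
  · exact Prod.Lex.right _ one_pos
  · exact Prod.Lex.left _ _ (by omega)
end

end Induction

section GramForm

variable {A : Matrix (Fin 4) (Fin 4) ℤ}

lemma map_Qval {R S : Type*} [CommRing R] [CommRing S] (f : R →+* S)
    (A : Matrix (Fin 4) (Fin 4) ℤ) (x : Fin 4 → R) : f (Qval A x) = Qval A fun i ↦ f (x i) := by
  simp [Qval]

/-- The quadratic form with Gram matrix `A`. -/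
noncomputable def gramForm (A : Matrix (Fin 4) (Fin 4) ℤ) : QuadraticForm ℤ (Fin 4 → ℤ) :=
  Matrix.toQuadraticForm'
    (Matrix.diagonal (fun i ↦ A i i / 2) + Matrix.of fun i j ↦ if i < j then A i j else 0)

lemma gramForm_apply (A : Matrix (Fin 4) (Fin 4) ℤ) (x : Fin 4 → ℤ) : gramForm A x = Qval A x := by
  simp only [gramForm, Matrix.toQuadraticForm', Qval, LinearMap.BilinMap.toQuadraticMap_apply,
    map_add, LinearMap.add_apply, Matrix.toLinearMap₂'_apply', dotProduct, Matrix.mulVec_diagonal]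
  simp only [Matrix.mulVec, dotProduct, Matrix.of_apply, ite_mul, zero_mul, ← Finset.sum_filter,
    Finset.filter_lt_eq_Ioi, Finset.mul_sum, Int.cast_id, pow_two, mul_left_comm]

lemma polarGram_gramForm (hA : IsGram A) : polarGram (gramForm A) (Pi.basisFun ℤ (Fin 4)) = A := by
  ext i j
  simp only [gramForm, Matrix.toQuadraticForm', polarGram, Matrix.of_apply, Pi.basisFun_apply,
    LinearMap.BilinMap.polar_toQuadraticMap, Matrix.toLinearMap₂'_apply', Matrix.add_apply,
    Matrix.mulVec_single_one, single_one_dotProduct, Matrix.col_apply, Matrix.diagonal_apply]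
  rcases lt_trichotomy i j with hij | rfl | hij
  · simp [hij, hij.not_gt, hij.ne, hij.ne']
  · simpa [← two_mul] using Int.mul_ediv_cancel' (hA.2 i)
  · simp [hij, hij.not_gt, hij.ne, hij.ne', hA.1.apply]

lemma polarDiscr_gramForm (hA : IsGram A) : polarDiscr (gramForm A) = A.det := by
  rw [← det_polarGram_eq_polarDiscr _ (Pi.basisFun ℤ (Fin 4)), polarGram_gramForm hA]

lemma ordDiscr_gramForm (hA : IsGram A) :
    ordDiscr (gramForm A) = A.det.natAbs.factorization 2 := by
  rw [ordDiscr, polarDiscr_gramForm hA, padicValInt, Nat.factorization_def _ Nat.prime_two]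

lemma intCast_Qval_eq_iff {N : ℕ} {x : Fin 4 → ℤ} {n : ℕ} :
    Qval A (fun i ↦ (x i : ZMod N)) = (n : ZMod N) ↔ (N : ℤ) ∣ gramForm A x - n := by
  have h := map_Qval (Int.castRingHom (ZMod N)) A x
  simp only [eq_intCast] at h
  rw [← h, gramForm_apply, eq_comm, ← Int.cast_natCast, ZMod.intCast_eq_intCast_iff_dvd_sub]

lemma ker_castAddHom_compLeft (ι : Type*) (N : ℕ) :
    ((Int.castAddHom (ZMod N)).compLeft ι).ker = multiples (ι → ℤ) N := by
  ext x
  have h : x ∈ ((Int.castAddHom (ZMod N)).compLeft ι).ker ↔ ∀ i, (N : ℤ) ∣ x i := by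
    rw [AddMonoidHom.mem_ker, funext_iff]
    exact forall_congr' fun i ↦ ZMod.intCast_zmod_eq_zero_iff_dvd (x i) N
  rw [h]
  refine ⟨fun hx ↦ ?_, ?_⟩
  · choose w hw using hx
    exact ⟨w, funext fun i ↦ by simp [hw i]⟩
  · rintro ⟨w, rfl⟩ i
    exact ⟨w i, by simp⟩

lemma densityMod_gramForm (A : Matrix (Fin 4) (Fin 4) ℤ) (p n k : ℕ) [NeZero p] :
    densityMod (gramForm A) n (p ^ k) = localCount A p n k / (p : ℝ) ^ (3 * k) := by
  let ρ := (Int.castAddHom (ZMod (p ^ k))).compLeft (Fin 4)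
  have hρ : Function.Surjective ρ := fun x ↦ by
    choose z hz using fun i ↦ ZMod.intCast_surjective (x i)
    exact ⟨z, funext hz⟩
  have hset :
      congruenceSet (gramForm A) n (p ^ k) = ρ ⁻¹' {x | Qval A x = (n : ZMod (p ^ k))} := by
    ext x
    exact intCast_Qval_eq_iff.symm
  have hp : (p : ℝ) ^ k ≠ 0 := pow_ne_zero k (NeZero.ne _)
  rw [densityMod, ← ker_castAddHom_compLeft, cosetDensity_ker, hset, Set.image_preimage_eq _ hρ,
    AddMonoidHom.range_eq_top.mpr hρ, ← Nat.card_coe_set_eq, AddSubgroup.card_top, Nat.card_fun,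
    Nat.card_zmod, Nat.card_fin, Set.coe_ofPred, localCount, pow_mul']
  push_cast
  field_simp

lemma isPrimitivelyRepresented_gramForm {n : ℕ} {x : Fin 4 → ℤ_[2]} (hx : Qval A x = (n : ℤ_[2]))
    (hprim : ¬ ∀ i, 2 ∣ x i) : IsPrimitivelyRepresented (gramForm A) n := by
  intro k
  choose z hz using fun i ↦ ZMod.intCast_surjective (PadicInt.toZModPow (k + 1) (x i))
  have hzn : ((2 ^ (k + 1) : ℕ) : ℤ) ∣ gramForm A z - n := by
    rw [← intCast_Qval_eq_iff, funext hz, ← map_Qval, hx, map_natCast]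
  refine ⟨z, ?_, (pow_dvd_pow 2 k.le_succ).trans (mod_cast hzn)⟩
  rintro ⟨w, rfl⟩
  refine hprim fun i ↦ ?_
  have hker : x i - (2 * w i : ℤ) ∈ RingHom.ker (PadicInt.toZModPow (p := 2) (k + 1)) := by
    rw [RingHom.mem_ker, map_sub, map_intCast, ← hz i]
    simp
  rw [PadicInt.ker_toZModPow, Ideal.mem_span_singleton, pow_succ', Int.cast_mul] at hker
  exact (dvd_sub_left (dvd_mul_right _ _)).mp (dvd_of_mul_right_dvd hker)

end GramForm

lemma det_ne_zero_of_posDefQF {A : Matrix (Fin 4) (Fin 4) ℤ} (h : PosDefQF A) : A.det ≠ 0 := by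
  have hcast : (A.map (Int.cast : ℤ → ℝ)).det = A.det :=
    (RingHom.map_det (Int.castRingHom ℝ) A).symm
  exact_mod_cast hcast ▸ h.det_pos.ne'

end DyadicDensity

open DyadicDensity in
theorem local_density_primitive_two_general
    (A : Matrix (Fin 4) (Fin 4) ℤ) (n : ℕ)
    (hA : IsGram A) (hdet : A.det ≠ 0) (hn : 0 < n)
    (h : ∃ x : Fin 4 → ℤ_[2], Qval A x = (n : ℤ_[2]) ∧ ¬ ∀ i, (2 : ℤ_[2]) ∣ x i) :
    DensityBound A 2 n
      ((1 / 16 : ℝ) * (2 : ℝ) ^ (-(((A.det.natAbs.factorization 2 + 1) / 2 : ℕ) : ℝ))) := by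
  obtain ⟨x, hx, hprim⟩ := h
  have hn' : (n : ℤ) ≠ 0 := mod_cast hn.ne'
  have hbound : HasDensityBound (gramForm A) n (4 + (A.det.natAbs.factorization 2 + 1) / 2) :=
    ordDiscr_gramForm hA ▸ hasDensityBound (by simp) (polarDiscr_gramForm hA ▸ hdet) hn'
      (isPrimitivelyRepresented_gramForm hx hprim)
  obtain ⟨β, hβ⟩ := exists_eventually_densityMod_eq (gramForm A) hn'
  refine ⟨β, tendsto_const_nhds.congr' (hβ.mono fun k hk ↦ ?_), ?_⟩
  · exact hk.symm.trans (densityMod_gramForm A 2 n k)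
  · obtain ⟨k, hk, hle⟩ := (hβ.and hbound).exists
    rw [Real.rpow_neg zero_le_two, Real.rpow_natCast, ← one_div, ← one_div_pow]
    exact hk ▸ hle.trans_eq' (by rw [pow_add]; norm_num)

/-- Lemma 2, part 2 (p = 2): if `n` is primitively represented over `ℤ_2` then
`β_2(Q;n) ≥ (1/16) · 2^(-⌊(ord_2(D(Q)) + 1)/2⌋)`. -/
theorem local_density_primitive_two
    (A : Matrix (Fin 4) (Fin 4) ℤ) (n : ℕ)
    (hA : IsGram A) (hprim : IsPrimitiveQF A) (hpd : PosDefQF A) (hn : 0 < n)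
    (h : ∃ x : Fin 4 → ℤ_[2], Qval A x = (n : ℤ_[2]) ∧ ¬ ∀ i, (2 : ℤ_[2]) ∣ x i) :
    DensityBound A 2 n
      ((1 / 16 : ℝ) * (2 : ℝ) ^ (-(((A.det.natAbs.factorization 2 + 1) / 2 : ℕ) : ℝ))) :=
  local_density_primitive_two_general A n hA (DyadicDensity.det_ne_zero_of_posDefQF hpd) hn h
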